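/- arXiv:0705.3932 — 6 statements merged into one kernel-verified Lean document; each statement's English description precedes it below -/
import Mathlib

section
/- Let p be a prime, m ≥ 1 an integer, and q = p^m. Let a, b be integers satisfying |a| ≤ 4√q and 2|a|√q − 2q ≤ b ≤ a²/4 + 2q, and suppose that at least one of the following four conditions holds: (2.1) p does not divide b; (2.2) 2·v_p(b) ≥ m (interpreting v_p(0) = ∞), p does not divide a, and δ := (b+2q)² − 4qa² is either 0 or not a square in the ring ℤ_p of p-adic integers; (2.3) p^m divides b, 2·v_p(a) ≥ m, Δ := a² − 4(b−2q) is a perfect square in ℤ, and, in case m is even (writing a = p^{m/2}·a′ and b = q·b′), one has p ≢ 1 (mod 4) whenever b′ = 2, and p ≢ 1 (mod 3) whenever a′ ≢ b′ (mod 2); (2.4) one of the following rows holds: (a,b) = (0,0) and either (m even and p ≢ 1 mod 8) or (m odd and p ≠ 2); (a,b) = (0,−q) and either (m even and p ≢ 1 mod 12) or (m odd and p ≠ 3); (a,b) = (0,q) and m odd; (a,b) = (0,−2q) and m odd; (a,b) = (0,2q) and m even and p ≡ 1 mod 4; a² = q and b = q and m even and p ≢ 1 mod 5; a² = 2q and b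 = q and m odd and p = 2; a² = 4q and b = 3q and m even and p ≡ 1 mod 3; a² = 5q and b = 3q and m odd and p = 5. Then q² divides 1 + a + b + aq + q² if and only if (q,a,b) is one of the following: (q, 1, −q−2) with q odd and q > 8; (q, 0, −1); (q, −1, q) with m odd or p ≢ 1 (mod 4); (q, −2, 2q+1); (13,9,42); (9,6,20); (7,4,16); (5,3,6); (5,8,26); (4,2,5); (4,4,11); (4,6,17); (3,1,4); (3,3,5); (3,4,10); (2,0,3); (2,1,0); (2,1,4); (2,2,5); (2,3,6). -/
/-- Over `ℤ_[p]` with `p` odd, an integer congruent modulo `p` to the square of an integer prime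
to `p` is a square. -/
theorem PadicInt.isSquare_intCast_of_dvd_sq_sub {p : ℕ} [Fact p.Prime] (hp2 : p ≠ 2) {r c : ℤ}
    (hr : ¬ (p : ℤ) ∣ r) (hrc : (p : ℤ) ∣ r ^ 2 - c) : IsSquare (c : ℤ_[p]) := by
  have hpp : Prime (p : ℤ) := Nat.prime_iff_prime_int.mp Fact.out
  have hderiv : ‖((2 * r : ℤ) : ℤ_[p])‖ = 1 := by
    refine le_antisymm (PadicInt.norm_le_one _) (not_lt.mp fun h => ?_)
    rw [PadicInt.norm_intCast_lt_one_iff] at h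
    rcases hpp.dvd_or_dvd h with h | h
    · exact hp2 ((Nat.prime_dvd_prime_iff_eq Fact.out Nat.prime_two).mp (by exact_mod_cast h))
    · exact hr h
  have hval : ‖((r ^ 2 - c : ℤ) : ℤ_[p])‖ < 1 := PadicInt.norm_intCast_lt_one_iff.mpr hrc
  obtain ⟨z, hz, -⟩ := hensels_lemma (p := p) (R := ℤ_[p])
    (F := Polynomial.X ^ 2 - Polynomial.C (c : ℤ_[p])) (a := (r : ℤ_[p])) (by
      push_cast at hderiv hval
      simpa [Polynomial.derivative_X_pow, one_add_one_eq_two, ← norm_mul, hderiv] using hval)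
  refine ⟨z, ?_⟩
  simp only [map_sub, map_pow, Polynomial.aeval_X, Polynomial.aeval_C] at hz
  rw [← pow_two]
  exact (sub_eq_zero.mp hz).symm

/-- If `p ≡ 1 (mod 4)` and `m` is even, then `δ = q (9q - 4)`, the invariant attached to
`(a, b) = (-1, q)`, is a square in `ℤ_[p]`. -/
theorem PadicInt.isSquare_delta_of_even {p m : ℕ} [Fact p.Prime] (hm : 1 ≤ m) (hme : Even m)
    (hp4 : p % 4 = 1) :
    IsSquare (((p : ℤ) ^ m * (9 * (p : ℤ) ^ m - 4) : ℤ) : ℤ_[p]) := by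
  have hpp : Prime (p : ℤ) := Nat.prime_iff_prime_int.mp Fact.out
  have hp2 : p ≠ 2 := by omega
  have hpm : (p : ℤ) ∣ (p : ℤ) ^ m := dvd_pow_self _ (by omega)
  obtain ⟨y, hy⟩ := (ZMod.exists_sq_eq_neg_one_iff (p := p)).mpr (by omega)
  obtain ⟨i, rfl⟩ := ZMod.intCast_surjective y
  have hi : (p : ℤ) ∣ i ^ 2 + 1 := by
    rw [← ZMod.intCast_zmod_eq_zero_iff_dvd]
    push_cast
    rw [pow_two, ← hy]
    ring
  have hi' : ¬ (p : ℤ) ∣ 2 * i := by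
    intro h
    rcases hpp.dvd_or_dvd h with h | h
    · exact hp2 ((Nat.prime_dvd_prime_iff_eq Fact.out Nat.prime_two).mp (by exact_mod_cast h))
    · have h1 : (p : ℤ) ∣ 1 := (Int.dvd_add_right (dvd_pow h two_ne_zero)).mp hi
      exact hpp.not_isUnit (isUnit_of_dvd_one h1)
  have h := PadicInt.isSquare_intCast_of_dvd_sq_sub (c := 9 * (p : ℤ) ^ m - 4) hp2 hi' (by
    have : (2 * i) ^ 2 - (9 * (p : ℤ) ^ m - 4) = 4 * (i ^ 2 + 1) - 9 * (p : ℤ) ^ m := by ring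
    rw [this]
    exact dvd_sub (hi.mul_left 4) (hpm.mul_left 9))
  rw [Int.cast_mul]
  refine IsSquare.mul ?_ h
  push_cast
  exact hme.isSquare_pow _

/-- The Weil bounds on `(a, b)` imply `0 < N` and `N ≤ (1 + s) ^ 4`, where `s = √q` and
`N = 1 + a + b + a q + q²`. -/
theorem weil_bounds_of_coeff_bounds {s a b : ℝ} (hs : 1 < s) (h1 : |a| ≤ 4 * s)
    (h2 : 2 * |a| * s - 2 * s ^ 2 ≤ b) (h3 : b ≤ a ^ 2 / 4 + 2 * s ^ 2) :
    0 < 1 + a + b + a * s ^ 2 + (s ^ 2) ^ 2 ∧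
      1 + a + b + a * s ^ 2 + (s ^ 2) ^ 2 ≤ (1 + s) ^ 4 := by
  obtain ⟨hl, hu⟩ := abs_le.mp h1
  constructor
  · have h4 : 0 ≤ (s ^ 2 + 1) * (a + |a|) :=
      mul_nonneg (by positivity) (by linarith [neg_abs_le a])
    have h5 : 0 ≤ (s - 1) ^ 2 * (4 * s - |a|) := mul_nonneg (sq_nonneg _) (by linarith)
    have h6 : 0 < (s - 1) ^ 4 := pow_pos (by linarith) 4
    nlinarith
  · have h4 : 0 ≤ (4 * s - a) * (a + 4 * s) := mul_nonneg (by linarith) (by linarith)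
    have h5 : 0 ≤ (s ^ 2 + 1) * (4 * s - a) := mul_nonneg (by positivity) (by linarith)
    nlinarith

/-- The solutions with cofactor `k ≥ 2`, where `N = k q²`. -/
theorem coeff_classification_of_two_le : ∀ q ∈ Finset.Icc (2 : ℤ) 27,
    ∀ a ∈ Finset.Icc (0 : ℤ) 20, a * a ≤ 16 * q →
    4 * (q * q - 1 - a - a * q) ≤ a * a + 8 * q → ∀ k ∈ Finset.Icc (2 : ℤ) 8,
    4 * (k * (q * q) - 1 - a - a * q - q * q) ≤ a * a + 8 * q →
    0 ≤ (k * (q * q) - 1 - a - a * q - q * q) + 2 * q →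
    4 * (a * a) * q ≤ ((k * (q * q) - 1 - a - a * q - q * q) + 2 * q) *
      ((k * (q * q) - 1 - a - a * q - q * q) + 2 * q) →
    (q, a, k * (q * q) - 1 - a - a * q - q * q) ∈
      [((2 : ℤ), (0 : ℤ), (3 : ℤ)), (2, 1, 0), (2, 1, 4), (2, 2, 5), (2, 3, 6), (3, 1, 4),
        (3, 3, 5), (3, 4, 10), (4, 2, 5), (4, 4, 11), (4, 6, 17), (5, 3, 6), (5, 8, 26),
        (6, 3, 14), (7, 4, 16), (8, 5, 18), (9, 6, 20), (12, 8, 39), (13, 9, 42),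
        (18, 13, 76)] := by
  decide +kernel

/-- A cofactor `k ≥ 2` forces `a` to be nonnegative. -/
theorem nonneg_of_two_le_cofactor {q a k : ℤ} (hq : 2 ≤ q) (hk : 2 ≤ k) (h1 : a ^ 2 ≤ 16 * q)
    (h3 : 4 * (k * q ^ 2 - 1 - a - a * q - q ^ 2) ≤ a ^ 2 + 8 * q) : 0 ≤ a := by
  by_contra! h
  have h4 : -(4 * q) ≤ a := by nlinarith
  have h5 : q ^ 2 ≤ (k - 1) * q ^ 2 := by nlinarith [sq_nonneg q]
  nlinarith [mul_nonneg (by linarith : 0 ≤ -1 - a) (by linarith : 0 ≤ a + 4 * q)]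

/-- The solutions with cofactor `1`, where `N = q²`. -/
theorem coeff_classification_of_eq_one {q a b : ℤ} (hq : 2 ≤ q) (h1 : a ^ 2 ≤ 16 * q)
    (h2 : 0 ≤ b + 2 * q) (h2' : 4 * a ^ 2 * q ≤ (b + 2 * q) ^ 2) (h3 : 4 * b ≤ a ^ 2 + 8 * q)
    (hN : 1 + a + b + a * q = 0) :
    (a = 1 ∧ b = -q - 2 ∧ 8 ≤ q) ∨ (a = 0 ∧ b = -1) ∨ (a = -1 ∧ b = q) ∨
      (a = -2 ∧ b = 2 * q + 1) := by
  have hb : b = -1 - a - a * q := by linarith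
  subst hb
  have hu : a < 2 := by nlinarith
  have hl : -3 < a := by
    by_contra! h
    have h4 : -(4 * q + 1) ≤ a := by nlinarith
    nlinarith [mul_nonneg (by linarith : 0 ≤ -3 - a) (by linarith : 0 ≤ a + (4 * q + 1))]
  have hcases : a = -2 ∨ a = -1 ∨ a = 0 ∨ a = 1 := by omega
  rcases hcases with rfl | rfl | rfl | rfl
  · right; right; right; constructor <;> linarith
  · right; right; left; constructor <;> linarith
  · right; left; constructor <;> linarith
  · left
    refine ⟨rfl, by linarith, ?_⟩
    by_contra! h
    nlinarith


/-- classification of the Weil polynomial data (q, a, b), where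
q = p^m is a prime power and a, b are integers satisfying the coefficient
bounds |a| ≤ 4√q and 2|a|√q − 2q ≤ b ≤ a²/4 + 2q together with one of the
conditions (2.1)–(2.4), for which q² divides 1 + a + b + aq + q².
Here the condition 2·v_p(b) ≥ m (with v_p(0) = ∞) is encoded as p^m ∣ b², and
similarly 2·v_p(a) ≥ m is encoded as p^m ∣ a². -/
theorem stmt_0 (p m : ℕ) [hp : Fact p.Prime] (hm : 1 ≤ m) (q : ℕ) (hq : q = p ^ m)
    (a b : ℤ)
    (hbound1 : ((|a| : ℤ) : ℝ) ≤ 4 * Real.sqrt q)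
    (hbound2 : 2 * ((|a| : ℤ) : ℝ) * Real.sqrt q - 2 * (q : ℝ) ≤ (b : ℝ))
    (hbound3 : (b : ℝ) ≤ (a : ℝ) ^ 2 / 4 + 2 * (q : ℝ))
    (hcond :
      -- (2.1) : p ∤ b
      (¬ (p : ℤ) ∣ b) ∨
      -- (2.2) : 2·v_p(b) ≥ m, p ∤ a, and δ = 0 or δ is not a square in ℤ_p
      ((p : ℤ) ^ m ∣ b ^ 2 ∧ ¬ (p : ℤ) ∣ a ∧
        ((b + 2 * (q : ℤ)) ^ 2 - 4 * (q : ℤ) * a ^ 2 = 0 ∨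
          ¬ IsSquare (((b + 2 * (q : ℤ)) ^ 2 - 4 * (q : ℤ) * a ^ 2 : ℤ) : ℤ_[p]))) ∨
      -- (2.3) : p^m ∣ b, 2·v_p(a) ≥ m, Δ is a perfect square, plus extra
      -- conditions when m is even
      ((p : ℤ) ^ m ∣ b ∧ (p : ℤ) ^ m ∣ a ^ 2 ∧
        IsSquare (a ^ 2 - 4 * (b - 2 * (q : ℤ))) ∧
        (Even m → ∀ a' b' : ℤ, a = (p : ℤ) ^ (m / 2) * a' → b = (q : ℤ) * b' →
          ((b' = 2 → p % 4 ≠ 1) ∧ (a' % 2 ≠ b' % 2 → p % 3 ≠ 1)))) ∨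
      -- (2.4)
      ((a = 0 ∧ b = 0 ∧ ((Even m ∧ p % 8 ≠ 1) ∨ (Odd m ∧ p ≠ 2))) ∨
       (a = 0 ∧ b = -(q : ℤ) ∧ ((Even m ∧ p % 12 ≠ 1) ∨ (Odd m ∧ p ≠ 3))) ∨
       (a = 0 ∧ b = (q : ℤ) ∧ Odd m) ∨
       (a = 0 ∧ b = -2 * (q : ℤ) ∧ Odd m) ∨
       (a = 0 ∧ b = 2 * (q : ℤ) ∧ Even m ∧ p % 4 = 1) ∨
       (a ^ 2 = (q : ℤ) ∧ b = (q : ℤ) ∧ Even m ∧ p % 5 ≠ 1) ∨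
       (a ^ 2 = 2 * (q : ℤ) ∧ b = (q : ℤ) ∧ Odd m ∧ p = 2) ∨
       (a ^ 2 = 4 * (q : ℤ) ∧ b = 3 * (q : ℤ) ∧ Even m ∧ p % 3 = 1) ∨
       (a ^ 2 = 5 * (q : ℤ) ∧ b = 3 * (q : ℤ) ∧ Odd m ∧ p = 5))) :
    (q : ℤ) ^ 2 ∣ 1 + a + b + a * (q : ℤ) + (q : ℤ) ^ 2 ↔
      ((a = 1 ∧ b = -(q : ℤ) - 2 ∧ Odd q ∧ 8 < q) ∨
       (a = 0 ∧ b = -1) ∨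
       (a = -1 ∧ b = (q : ℤ) ∧ (Odd m ∨ p % 4 ≠ 1)) ∨
       (a = -2 ∧ b = 2 * (q : ℤ) + 1) ∨
       (q = 13 ∧ a = 9 ∧ b = 42) ∨
       (q = 9 ∧ a = 6 ∧ b = 20) ∨
       (q = 7 ∧ a = 4 ∧ b = 16) ∨
       (q = 5 ∧ a = 3 ∧ b = 6) ∨ (q = 5 ∧ a = 8 ∧ b = 26) ∨
       (q = 4 ∧ a = 2 ∧ b = 5) ∨ (q = 4 ∧ a = 4 ∧ b = 11) ∨ (q = 4 ∧ a = 6 ∧ b = 17) ∨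
       (q = 3 ∧ a = 1 ∧ b = 4) ∨ (q = 3 ∧ a = 3 ∧ b = 5) ∨ (q = 3 ∧ a = 4 ∧ b = 10) ∨
       (q = 2 ∧ a = 0 ∧ b = 3) ∨ (q = 2 ∧ a = 1 ∧ b = 0) ∨ (q = 2 ∧ a = 1 ∧ b = 4) ∨
       (q = 2 ∧ a = 2 ∧ b = 5) ∨ (q = 2 ∧ a = 3 ∧ b = 6)) := by
  have hpp : p.Prime := hp.out
  have hppz : Prime (p : ℤ) := Nat.prime_iff_prime_int.mp hpp
  have hq2 : 2 ≤ q := hq ▸ hpp.two_le.trans (Nat.le_self_pow (by omega) p)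
  constructor
  swap
  · rintro (⟨rfl, rfl, -⟩ | ⟨rfl, rfl⟩ | ⟨rfl, rfl, -⟩ | ⟨rfl, rfl⟩ | h)
    iterate 4 exact ⟨1, by ring⟩
    rcases h with ⟨rfl, rfl, rfl⟩ | ⟨rfl, rfl, rfl⟩ | ⟨rfl, rfl, rfl⟩ | ⟨rfl, rfl, rfl⟩ |
      ⟨rfl, rfl, rfl⟩ | ⟨rfl, rfl, rfl⟩ | ⟨rfl, rfl, rfl⟩ | ⟨rfl, rfl, rfl⟩ | ⟨rfl, rfl, rfl⟩ |
      ⟨rfl, rfl, rfl⟩ | ⟨rfl, rfl, rfl⟩ | ⟨rfl, rfl, rfl⟩ | ⟨rfl, rfl, rfl⟩ | ⟨rfl, rfl, rfl⟩ |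
      ⟨rfl, rfl, rfl⟩ | ⟨rfl, rfl, rfl⟩ <;> norm_num
  rintro ⟨k, hk⟩
  have hqz : (q : ℤ) = (p : ℤ) ^ m := by exact_mod_cast hq
  have hq2z : (2 : ℤ) ≤ q := by exact_mod_cast hq2
  have hq2r : (2 : ℝ) ≤ q := by exact_mod_cast hq2
  have hs0 : 0 ≤ Real.sqrt q := Real.sqrt_nonneg _
  have hss : Real.sqrt q ^ 2 = q := Real.sq_sqrt (by positivity)
  have hs1 : 1.414 < Real.sqrt q := by nlinarith
  rw [Int.cast_abs] at hbound1 hbound2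
  have h1 : a ^ 2 ≤ 16 * (q : ℤ) := by
    have : (a : ℝ) ^ 2 ≤ 16 * q := by
      rw [← sq_abs]; nlinarith [abs_nonneg (a : ℝ)]
    exact_mod_cast this
  have h2 : 0 ≤ b + 2 * (q : ℤ) := by
    have : (0 : ℝ) ≤ b + 2 * q := by
      have := mul_nonneg (abs_nonneg (a : ℝ)) hs0
      linarith
    exact_mod_cast this
  have h2' : 4 * a ^ 2 * (q : ℤ) ≤ (b + 2 * (q : ℤ)) ^ 2 := by
    have h := mul_nonneg (abs_nonneg (a : ℝ)) hs0
    have : 4 * (a : ℝ) ^ 2 * q ≤ (b + 2 * q) ^ 2 := by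
      calc 4 * (a : ℝ) ^ 2 * q = (2 * (|(a : ℝ)| * Real.sqrt q)) ^ 2 := by
            rw [mul_pow, mul_pow, hss, sq_abs]; ring
        _ ≤ _ := pow_le_pow_left₀ (by linarith) (by linarith) 2
    exact_mod_cast this
  have h3 : 4 * b ≤ a ^ 2 + 8 * (q : ℤ) := by
    have : 4 * (b : ℝ) ≤ a ^ 2 + 8 * q := by linarith
    exact_mod_cast this
  have hkr : 1 + (a : ℝ) + b + a * Real.sqrt q ^ 2 + (Real.sqrt q ^ 2) ^ 2 =
      k * Real.sqrt q ^ 4 := by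
    rw [show Real.sqrt q ^ 4 = (Real.sqrt q ^ 2) ^ 2 by ring, hss, mul_comm (k : ℝ)]
    exact_mod_cast hk
  obtain ⟨hNpos, hNle⟩ := weil_bounds_of_coeff_bounds (b := b) (by linarith) hbound1
    (by rwa [hss]) (by rwa [hss])
  rw [hkr] at hNpos hNle
  have hs4 : 0 < Real.sqrt q ^ 4 := by positivity
  have hk0 : 0 < k := by
    have : (0 : ℝ) < k := pos_of_mul_pos_left hNpos hs4.le
    exact_mod_cast this
  have hk8 : k ≤ 8 := by
    by_contra! h
    have hkr9 : (9 : ℝ) ≤ k := by exact_mod_cast h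
    have h5 : (1 + Real.sqrt q) ^ 4 ≤ (1.71 * Real.sqrt q) ^ 4 :=
      pow_le_pow_left₀ (by linarith) (by linarith) 4
    rw [mul_pow] at h5
    nlinarith
  -- If `p ∣ b` and `p ∤ a`, then only the second of the four conditions can hold.
  have hexcl : (p : ℤ) ∣ b → ¬ (p : ℤ) ∣ a → (p : ℤ) ^ m ∣ b ^ 2 ∧
      ((b + 2 * (q : ℤ)) ^ 2 - 4 * (q : ℤ) * a ^ 2 = 0 ∨
        ¬ IsSquare (((b + 2 * (q : ℤ)) ^ 2 - 4 * (q : ℤ) * a ^ 2 : ℤ) : ℤ_[p])) := by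
    intro hb ha
    have hpq : (p : ℤ) ∣ q := hqz ▸ dvd_pow_self _ (by omega)
    have haz : a ≠ 0 := fun h => ha (h ▸ dvd_zero _)
    have hasq : ∀ c : ℤ, a ^ 2 ≠ c * q := fun c h =>
      ha (hppz.dvd_of_dvd_pow (h ▸ hpq.mul_left c))
    rcases hcond with h | ⟨h, -, h'⟩ | ⟨-, h, -⟩ | h
    · exact absurd hb h
    · exact ⟨h, h'⟩
    · exact absurd (hppz.dvd_of_dvd_pow ((hqz ▸ hpq).trans h)) ha
    · rcases h with h | h | h | h | h | h | h | h | h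
      iterate 5 exact absurd h.1 haz
      · exact absurd (h.1.trans (one_mul _).symm) (hasq 1)
      iterate 3 exact absurd h.1 (hasq _)
  rcases eq_or_ne k 1 with rfl | hk1
  · rcases coeff_classification_of_eq_one hq2z h1 h2 h2' h3 (by linarith) with
      ⟨rfl, rfl, hq8⟩ | ⟨rfl, rfl⟩ | ⟨rfl, rfl⟩ | ⟨rfl, rfl⟩
    · have hodd : Odd q := by
        by_contra hev
        rw [Nat.not_odd_iff_even] at hev
        have h2p : 2 ∣ p := Nat.prime_two.dvd_of_dvd_pow (hq ▸ hev.two_dvd)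
        obtain rfl : 2 = p := (Nat.prime_dvd_prime_iff_eq Nat.prime_two hpp).mp h2p
        have hev' : (2 : ℤ) ∣ q := by exact_mod_cast hev.two_dvd
        obtain ⟨hd, -⟩ := hexcl (by push_cast; omega) (by norm_num)
        have hm3 : 3 ≤ m := by
          by_contra! hlt
          have : (2 : ℕ) ^ m < 2 ^ 3 := Nat.pow_lt_pow_right (by norm_num) hlt
          omega
        have h8q : (8 : ℤ) ∣ q := by
          rw [hqz]; exact_mod_cast pow_dvd_pow 2 hm3
        have h8 : (8 : ℤ) ∣ (-(q : ℤ) - 2) ^ 2 := h8q.trans (hqz ▸ hd)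
        obtain ⟨t, ht⟩ := h8q
        obtain ⟨u, hu⟩ := h8
        rw [ht] at hu
        have : (-(8 * t) - 2) ^ 2 = 8 * (8 * t ^ 2 + 4 * t) + 4 := by ring
        omega
      refine Or.inl ⟨rfl, rfl, hodd, ?_⟩
      rcases hodd with ⟨t, ht⟩
      omega
    · exact Or.inr (Or.inl ⟨rfl, rfl⟩)
    · refine Or.inr (Or.inr (Or.inl ⟨rfl, rfl, ?_⟩))
      by_contra! h
      obtain ⟨hme, hp4⟩ := h
      rw [Nat.not_odd_iff_even] at hme
      have hna : ¬ (p : ℤ) ∣ -1 := fun h =>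
        hppz.not_isUnit (isUnit_of_dvd_unit h (by simp))
      obtain ⟨-, h | h⟩ := hexcl (hqz ▸ dvd_pow_self _ (by omega)) hna
      · nlinarith
      · refine h ?_
        have : ((q : ℤ) + 2 * q) ^ 2 - 4 * q * (-1) ^ 2 = (p : ℤ) ^ m * (9 * (p : ℤ) ^ m - 4) := by
          rw [← hqz]; ring
        rw [this]
        exact PadicInt.isSquare_delta_of_even hm hme hp4
    · exact Or.inr (Or.inr (Or.inr (Or.inl ⟨rfl, rfl⟩)))
  · have hk2 : 2 ≤ k := by omega
    have hq27 : (q : ℤ) ≤ 27 := by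
      by_contra! h
      have hq28 : (28 : ℝ) ≤ q := by exact_mod_cast h
      have hkr2 : (2 : ℝ) ≤ k := by exact_mod_cast hk2
      have hs5 : 5.2915 < Real.sqrt q := by nlinarith
      have h5 : (1 + Real.sqrt q) ^ 4 ≤ (1.189 * Real.sqrt q) ^ 4 :=
        pow_le_pow_left₀ (by linarith) (by linarith) 4
      rw [mul_pow] at h5
      nlinarith
    have hb : b = k * (q : ℤ) ^ 2 - 1 - a - a * q - (q : ℤ) ^ 2 := by linarith
    have ha0 : 0 ≤ a := nonneg_of_two_le_cofactor hq2z hk2 h1 (hb ▸ h3)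
    have hmem := coeff_classification_of_two_le q (Finset.mem_Icc.mpr ⟨hq2z, hq27⟩) a
      (Finset.mem_Icc.mpr ⟨ha0, by nlinarith⟩) (by linarith) (by nlinarith [sq_nonneg (q : ℤ)])
      k (Finset.mem_Icc.mpr ⟨hk2, hk8⟩)
    simp only [← pow_two, ← hb] at hmem
    replace hmem := hmem h3 h2 h2'
    have h6 : ¬ 6 ∣ q := by
      intro h
      have h2p : 2 ∣ p := Nat.prime_two.dvd_of_dvd_pow (hq ▸ (by omega : 2 ∣ q))
      have h3p : 3 ∣ p := Nat.prime_three.dvd_of_dvd_pow (hq ▸ (by omega : 3 ∣ q))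
      have := (Nat.prime_dvd_prime_iff_eq Nat.prime_two hpp).mp h2p
      have := (Nat.prime_dvd_prime_iff_eq Nat.prime_three hpp).mp h3p
      omega
    have h8 : ¬ (q = 8 ∧ a = 5 ∧ b = 18) := by
      rintro ⟨hq8, rfl, rfl⟩
      have h2p : 2 ∣ p := Nat.prime_two.dvd_of_dvd_pow (hq ▸ (by omega : 2 ∣ q))
      obtain rfl : 2 = p := (Nat.prime_dvd_prime_iff_eq Nat.prime_two hpp).mp h2p
      obtain ⟨hd, -⟩ := hexcl (by norm_num) (by norm_num)
      rw [← hqz, hq8] at hd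
      norm_num at hd
    simp only [List.mem_cons, Prod.mk.injEq, List.not_mem_nil, or_false] at hmem
    rcases hmem with
      ⟨hqv, rfl, rfl⟩ | ⟨hqv, rfl, rfl⟩ | ⟨hqv, rfl, rfl⟩ | ⟨hqv, rfl, rfl⟩ | ⟨hqv, rfl, rfl⟩ |
      ⟨hqv, rfl, rfl⟩ | ⟨hqv, rfl, rfl⟩ | ⟨hqv, rfl, rfl⟩ | ⟨hqv, rfl, rfl⟩ | ⟨hqv, rfl, rfl⟩ |
      ⟨hqv, rfl, rfl⟩ | ⟨hqv, rfl, rfl⟩ | ⟨hqv, rfl, rfl⟩ | ⟨hqv, rfl, rfl⟩ | ⟨hqv, rfl, rfl⟩ |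
      ⟨hqv, rfl, rfl⟩ | ⟨hqv, rfl, rfl⟩ | ⟨hqv, rfl, rfl⟩ | ⟨hqv, rfl, rfl⟩ | ⟨hqv, rfl, rfl⟩ <;>
      norm_cast at hqv <;> simp [hqv] at h6 h8 ⊢
end

section
/- If q is a prime power (q = p^m with p prime and m ≥ 1), then 8q + 4 is a perfect square if and only if q = 4. -/
/-- If `2 * (k * (k + 1))` is a power of two, then `k = 1`. -/
lemma eq_one_of_two_mul_mul_succ_eq_two_pow {k m : ℕ} (h : 2 * (k * (k + 1)) = 2 ^ m) :
    k = 1 := by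
  obtain ⟨a, -, ha⟩ := (Nat.dvd_prime_pow Nat.prime_two).1
    (⟨2 * (k + 1), by rw [← h]; ring⟩ : k ∣ 2 ^ m)
  obtain ⟨b, -, hb⟩ := (Nat.dvd_prime_pow Nat.prime_two).1
    (⟨2 * k, by rw [← h]; ring⟩ : k + 1 ∣ 2 ^ m)
  rcases a with _ | a
  · simpa using ha
  rcases b with _ | b
  · have := Nat.pow_pos (n := a + 1) (Nat.zero_lt_two)
    omega
  · rw [pow_succ] at ha hb
    omega

/-- If `8 * q + 4` is a square, then `q` is twice a product of consecutive naturals. -/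
lemma exists_eq_two_mul_mul_succ_of_isSquare {q : ℕ} (h : IsSquare (8 * q + 4)) :
    ∃ k, q = 2 * (k * (k + 1)) := by
  obtain ⟨r, hr⟩ := h
  obtain ⟨s, rfl | rfl⟩ := Nat.even_or_odd' r
  · obtain ⟨k, rfl | rfl⟩ := Nat.even_or_odd' s
    · ring_nf at hr
      omega
    · exact ⟨k, by linarith⟩
  · ring_nf at hr
    omega

/-- If q = p^m is a prime power (p prime, m ≥ 1), then 8q + 4 is a
perfect square if and only if q = 4. -/
theorem stmt_6 (p m : ℕ) (hp : p.Prime) (hm : 1 ≤ m) (q : ℕ) (hq : q = p ^ m) :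
    IsSquare (8 * q + 4) ↔ q = 4 := by
  constructor
  · intro h
    obtain ⟨k, hk⟩ := exists_eq_two_mul_mul_succ_of_isSquare h
    have h_dvd : 2 ∣ p ^ m := ⟨k * (k + 1), by rw [← hq, hk]⟩
    obtain rfl : 2 = p :=
      (Nat.prime_dvd_prime_iff_eq Nat.prime_two hp).1 (Nat.prime_two.dvd_of_dvd_pow h_dvd)
    rw [hk, eq_one_of_two_mul_mul_succ_eq_two_pow (hk.symm.trans hq)]
  · intro h
    exact ⟨6, by rw [h]⟩
end

section
/- Let p be an odd prime, m ≥ 1 an integer, and q = p^m. Then 9q² − 4q is nonzero, and 9q² − 4q is a square in the ring ℤ_p of p-adic integers if and only if m is even and p ≡ 1 (mod 4). -/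
theorem ZMod.two_ne_zero_of_odd_prime {p : ℕ} [hp : Fact p.Prime] (hodd : Odd p) :
    (2 : ZMod p) ≠ 0 := by
  intro h
  have hdvd : p ∣ 2 := (ZMod.natCast_eq_zero_iff 2 p).mp (by exact_mod_cast h)
  have := Nat.le_of_dvd two_pos hdvd
  have := hp.out.two_le
  have := Nat.odd_iff.mp hodd
  omega

theorem PadicInt.isUnit_iff_toZMod_ne_zero {p : ℕ} [Fact p.Prime] {x : ℤ_[p]} :
    IsUnit x ↔ PadicInt.toZMod x ≠ 0 := by
  rw [← not_iff_not, ← mem_nonunits_iff, ← IsLocalRing.mem_maximalIdeal, ← PadicInt.ker_toZMod,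
    RingHom.mem_ker, not_ne_iff]

/-- Hensel's lemma for squares: a unit of `ℤ_[p]`, `p` odd, is a square iff its residue is. -/
theorem PadicInt.isSquare_iff_isSquare_toZMod {p : ℕ} [Fact p.Prime] (hodd : Odd p)
    {u : ℤ_[p]} (hu : IsUnit u) : IsSquare u ↔ IsSquare (PadicInt.toZMod u) := by
  refine ⟨fun h => h.map PadicInt.toZMod, ?_⟩
  rintro ⟨r, hr⟩
  obtain ⟨a, rfl⟩ := ZMod.ringHom_surjective (PadicInt.toZMod (p := p)) r
  have hlt : ‖a ^ 2 - u‖ < 1 := by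
    rw [← PadicInt.mem_nonunits, ← IsLocalRing.mem_maximalIdeal, ← PadicInt.ker_toZMod,
      RingHom.mem_ker, map_sub, map_pow, hr, sq, sub_self]
  have hda : IsUnit (2 * a) := by
    rw [PadicInt.isUnit_iff_toZMod_ne_zero] at hu ⊢
    rw [map_mul, map_ofNat]
    refine mul_ne_zero (ZMod.two_ne_zero_of_odd_prime hodd) fun h => hu ?_
    rw [hr, h, mul_zero]
  obtain ⟨z, hz, -⟩ := hensels_lemma (p := p) (F := (Polynomial.X ^ 2 - Polynomial.C u))
    (a := a) (by simpa [one_add_one_eq_two, PadicInt.isUnit_iff.mp hda] using hlt)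
  refine ⟨z, ?_⟩
  simp only [map_sub, map_pow, Polynomial.aeval_X, Polynomial.aeval_C, Algebra.algebraMap_self,
    RingHom.id_apply, sub_eq_zero] at hz
  rw [← hz, sq]

/-- For a unit `u`, `p ^ m * u` is a square iff `m` is even and `u` is a square. -/
theorem PadicInt.isSquare_p_pow_mul_iff {p : ℕ} [hp : Fact p.Prime] (m : ℕ)
    {u : ℤ_[p]} (hu : IsUnit u) : IsSquare ((p : ℤ_[p]) ^ m * u) ↔ Even m ∧ IsSquare u := by
  have hp0 : (p : ℤ_[p]) ≠ 0 := PadicInt.prime_p.ne_zero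
  constructor
  · rintro ⟨r, hr⟩
    have hr0 : r ≠ 0 := by
      rintro rfl
      simp [hp0, hu.ne_zero] at hr
    have hval := congrArg PadicInt.valuation hr
    have hru := PadicInt.unitCoeff_spec hr0
    have huv : u.valuation = 0 := by
      have h := PadicInt.norm_eq_zpow_neg_valuation hu.ne_zero
      rw [PadicInt.isUnit_iff.mp hu, eq_comm, zpow_eq_one_iff_right₀ (by positivity)
        (by exact_mod_cast hp.out.ne_one)] at h
      omega
    rw [PadicInt.valuation_p_pow_mul m u hu.ne_zero, PadicInt.valuation_mul hr0 hr0, huv,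
      add_zero] at hval
    refine ⟨⟨_, hval⟩, PadicInt.unitCoeff hr0, mul_left_cancel₀ (pow_ne_zero m hp0) ?_⟩
    rw [hr]
    nth_rewrite 1 2 [hru]
    rw [hval]
    ring
  · rintro ⟨hm, hu⟩
    exact (hm.isSquare_pow _).mul hu

/-- Let p be an odd prime, m ≥ 1, q = p^m. Then 9q² − 4q ≠ 0, and
9q² − 4q is a square in ℤ_p if and only if m is even and p ≡ 1 (mod 4). -/
theorem stmt_9 (p : ℕ) [hp : Fact p.Prime] (hodd : Odd p) (m : ℕ) (hm : 1 ≤ m)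
    (q : ℕ) (hq : q = p ^ m) :
    (9 * (q : ℤ) ^ 2 - 4 * (q : ℤ) ≠ 0) ∧
      (IsSquare ((9 * (q : ℤ) ^ 2 - 4 * (q : ℤ) : ℤ) : ℤ_[p]) ↔
        (Even m ∧ p % 4 = 1)) := by
  have hp1 : p % 2 = 1 := Nat.odd_iff.mp hodd
  have hp0 : (p : ZMod p) = 0 := ZMod.natCast_self p
  have hres : PadicInt.toZMod (9 * (p : ℤ_[p]) ^ m - 4) = -1 * (2 * 2) := by
    simp only [map_sub, map_mul, map_pow, map_natCast, map_ofNat, hp0,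
      zero_pow (Nat.one_le_iff_ne_zero.mp hm)]
    norm_num
  have h2 : (2 : ZMod p) ≠ 0 := ZMod.two_ne_zero_of_odd_prime hodd
  have hu : IsUnit (9 * (p : ℤ_[p]) ^ m - 4) := by
    simp [PadicInt.isUnit_iff_toZMod_ne_zero, hres, h2, -map_sub]
  have hsq : IsSquare (-1 * (2 * 2) : ZMod p) ↔ IsSquare (-1 : ZMod p) := by
    refine ⟨?_, fun h => h.mul (IsSquare.mul_self 2)⟩
    rintro ⟨r, hr⟩
    refine ⟨r / 2, ?_⟩
    field_simp
    linear_combination hr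
  subst hq
  constructor
  · have hpos : (0 : ℤ) < (p ^ m : ℕ) := by exact_mod_cast pow_pos hp.out.pos m
    nlinarith
  · have hfac : ((9 * ((p ^ m : ℕ) : ℤ) ^ 2 - 4 * ((p ^ m : ℕ) : ℤ) : ℤ) : ℤ_[p]) =
        (p : ℤ_[p]) ^ m * (9 * (p : ℤ_[p]) ^ m - 4) := by
      push_cast
      ring
    rw [hfac, PadicInt.isSquare_p_pow_mul_iff m hu,
      PadicInt.isSquare_iff_isSquare_toZMod hodd hu, hres, hsq, ZMod.exists_sq_eq_neg_one_iff]
    have : p % 4 ≠ 3 ↔ p % 4 = 1 := by omega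
    rw [this]
end

section
/- Let q be an odd positive integer. Then there do not exist integers s and t with X⁴ + X³ − (q+2)X² + qX + q² = (X² − sX + q)(X² − tX + q) in ℤ[X]. -/
open Polynomial

/-- Let q be an odd positive integer. Then there do not exist
integers s and t with
X⁴ + X³ − (q+2)X² + qX + q² = (X² − sX + q)(X² − tX + q) in ℤ[X]. -/
theorem stmt_11 (q : ℕ) (hpos : 0 < q) (hodd : Odd q) :
    ¬ ∃ s t : ℤ,
        (X ^ 4 + X ^ 3 - C ((q : ℤ) + 2) * X ^ 2 + C (q : ℤ) * X + C ((q : ℤ) ^ 2) : ℤ[X]) =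
          (X ^ 2 - C s * X + C (q : ℤ)) * (X ^ 2 - C t * X + C (q : ℤ)) := by
  rintro ⟨s, t, h⟩
  have eval_one := congrArg (eval 1) h
  have eval_neg_one := congrArg (eval (-1)) h
  simp only [eval_add, eval_sub, eval_mul, eval_pow, eval_X, eval_C] at eval_one eval_neg_one
  have hprod : s * t = -3 * q - 2 := by linarith
  have hsum : t = -1 - s := by
    have hq : (q : ℤ) + 1 ≠ 0 := by positivity
    apply mul_left_cancel₀ hq
    linarith
  obtain ⟨k, rfl⟩ := hodd
  obtain ⟨m, hm⟩ := Int.even_mul_succ_self s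
  have hneg : s * (s + 1) = 3 * (2 * k + 1) + 2 := by
    rw [hsum] at hprod
    push_cast at hprod
    linarith
  omega
end

section
/- Let q be a prime power (q = p^m with p prime and m ≥ 1). There exist integers s and t with X⁴ − X² + q² = (X² − sX + q)(X² − tX + q) in ℤ[X] if and only if q = 4, in which case {s, t} = {3, −3}. -/
open Polynomial

/-- A prime power of the form `2 * k * (k + 1)` has `k = 1`. -/
theorem eq_one_of_two_mul_mul_succ_eq_prime_pow {p m k : ℕ} (hp : p.Prime)
    (h : 2 * (k * (k + 1)) = p ^ m) : k = 1 := by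
  have hp2 : p = 2 :=
    ((Nat.prime_dvd_prime_iff_eq Nat.prime_two hp).1
      (Nat.prime_two.dvd_of_dvd_pow (h ▸ Dvd.intro _ rfl))).symm
  subst hp2
  have eq_one_of_odd : ∀ d : ℕ, Odd d → d ∣ 2 ^ m → d = 1 := fun d hd hdvd =>
    Nat.Coprime.eq_one_of_dvd (hd.coprime_two_right.pow_right m) hdvd
  rcases Nat.even_or_odd k with hk | hk
  · have hk0 : k + 1 = 1 := eq_one_of_odd _ hk.add_one ⟨2 * k, by rw [← h]; ring⟩
    have hpos : 0 < 2 ^ m := by positivity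
    simp only [Nat.add_eq_right] at hk0
    simp only [hk0, zero_mul, mul_zero] at h
    exact absurd h hpos.ne
  · exact eq_one_of_odd _ hk ⟨2 * (k + 1), by rw [← h]; ring⟩

/-- An odd number `2 * p ^ m + 1` with `p` prime is a perfect square only for `p ^ m = 4`. -/
theorem eq_four_of_sq_eq_two_mul_prime_pow_add_one {p m n : ℕ} (hp : p.Prime)
    (h : n ^ 2 = 2 * p ^ m + 1) : p ^ m = 4 := by
  have hn : Odd n := by
    have : Odd (n ^ 2) := h ▸ odd_two_mul_add_one _
    exact (Nat.odd_pow_iff two_ne_zero).1 this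
  obtain ⟨k, rfl⟩ := hn
  have hk : 2 * (k * (k + 1)) = p ^ m := by linarith
  rw [← hk, eq_one_of_two_mul_mul_succ_eq_prime_pow hp hk]

/-- A factorization of `X ^ 4 - X ^ 2 + q ^ 2` into two quadratics with constant term `q`
has opposite linear coefficients, with square `2 * q + 1`. -/
theorem eq_neg_and_sq_eq_of_factorization {q : ℕ} {s t : ℤ}
    (h : (X ^ 4 - X ^ 2 + C ((q : ℤ) ^ 2) : ℤ[X]) =
      (X ^ 2 - C s * X + C (q : ℤ)) * (X ^ 2 - C t * X + C (q : ℤ))) :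
    t = -s ∧ s ^ 2 = 2 * q + 1 := by
  have h1 := congrArg (eval 1) h
  have h2 := congrArg (eval (-1)) h
  simp only [eval_add, eval_sub, eval_mul, eval_pow, eval_X, eval_C] at h1 h2
  have hst : s + t = 0 := by
    have hprod : (1 + (q : ℤ)) * (s + t) = 0 := by linarith
    exact (mul_eq_zero.1 hprod).resolve_left (by positivity)
  obtain rfl : t = -s := by linarith
  exact ⟨rfl, by linarith⟩

/-- Let q = p^m be a prime power. There exist integers s and t with
X⁴ − X² + q² = (X² − sX + q)(X² − tX + q) in ℤ[X] if and only if q = 4, in which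
case {s, t} = {3, −3}. -/
theorem stmt_12 (p m : ℕ) (hp : p.Prime) (hm : 1 ≤ m) (q : ℕ) (hq : q = p ^ m) :
    ((∃ s t : ℤ,
        (X ^ 4 - X ^ 2 + C ((q : ℤ) ^ 2) : ℤ[X]) =
          (X ^ 2 - C s * X + C (q : ℤ)) * (X ^ 2 - C t * X + C (q : ℤ))) ↔ q = 4) ∧
    (∀ s t : ℤ,
        (X ^ 4 - X ^ 2 + C ((q : ℤ) ^ 2) : ℤ[X]) =
          (X ^ 2 - C s * X + C (q : ℤ)) * (X ^ 2 - C t * X + C (q : ℤ)) →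
        (s = 3 ∧ t = -3) ∨ (s = -3 ∧ t = 3)) := by
  have hq4 : ∀ s t : ℤ,
      (X ^ 4 - X ^ 2 + C ((q : ℤ) ^ 2) : ℤ[X]) =
        (X ^ 2 - C s * X + C (q : ℤ)) * (X ^ 2 - C t * X + C (q : ℤ)) → q = 4 := by
    intro s t h
    have hs := (eq_neg_and_sq_eq_of_factorization h).2
    rw [← Int.natAbs_sq] at hs
    rw [hq] at hs ⊢
    exact eq_four_of_sq_eq_two_mul_prime_pow_add_one hp (by exact_mod_cast hs)
  refine ⟨⟨fun ⟨s, t, h⟩ => hq4 s t h, ?_⟩, ?_⟩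
  · intro h4
    refine ⟨3, -3, ?_⟩
    rw [h4]
    simp only [Nat.cast_ofNat, map_neg, map_pow, map_ofNat]
    ring
  · intro s t h
    obtain ⟨rfl, hs⟩ := eq_neg_and_sq_eq_of_factorization h
    rw [hq4 s _ h] at hs
    have hs9 : s ^ 2 = 3 ^ 2 := by rw [hs]; norm_num
    rcases sq_eq_sq_iff_eq_or_eq_neg.1 hs9 with rfl | rfl <;> simp
end

section
/- Let q be a prime power (q = p^m with p prime and m ≥ 1). There exist integers s and t with X⁴ − X³ + qX² − qX + q² = (X² − sX + q)(X² − tX + q) in ℤ[X] if and only if q = 2, in which case {s, t} = {2, −1}. -/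
open Polynomial

/-- Comparing coefficients in the factorization amounts to `s + t = 1` and `s * t = -q`. -/
lemma weil_factorization_iff (q : ℕ) (s t : ℤ) :
    (X ^ 4 - X ^ 3 + C (q : ℤ) * X ^ 2 - C (q : ℤ) * X + C ((q : ℤ) ^ 2) : ℤ[X]) =
        (X ^ 2 - C s * X + C (q : ℤ)) * (X ^ 2 - C t * X + C (q : ℤ)) ↔
      s + t = 1 ∧ s * t = -q := by
  constructor
  · intro h
    have h_one := congrArg (eval 1) h
    have h_neg_one := congrArg (eval (-1)) h
    simp only [eval_add, eval_sub, eval_mul, eval_pow, eval_X, eval_C] at h_one h_neg_one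
    have h_sum : s + t = 1 := by
      have hq : (q : ℤ) + 1 ≠ 0 := by positivity
      apply mul_left_cancel₀ hq
      linarith
    refine ⟨h_sum, ?_⟩
    obtain rfl : t = 1 - s := by linarith
    linarith
  · rintro ⟨h_sum, h_prod⟩
    obtain rfl : t = 1 - s := by linarith
    have h : (q : ℤ) = s * (s - 1) := by linarith
    rw [h]
    simp only [C_mul, C_sub, C_pow, C_1]
    ring

/-- If the product of two consecutive positive integers is a prime power, they are 1 and 2. -/
lemma eq_one_of_mul_succ_eq_prime_pow {p m n : ℕ} (hp : p.Prime) (hn : 0 < n)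
    (h : n * (n + 1) = p ^ m) : n = 1 := by
  obtain ⟨a, -, ha⟩ := (Nat.dvd_prime_pow hp).1 (Dvd.intro _ h)
  obtain ⟨b, -, hb⟩ := (Nat.dvd_prime_pow hp).1 (Dvd.intro_left _ h)
  have hb0 : b ≠ 0 := by
    rintro rfl
    simp at hb
    lia
  by_contra hn1
  have ha0 : a ≠ 0 := by
    rintro rfl
    exact hn1 (by simpa using ha)
  have h_dvd : p ∣ n := ha ▸ dvd_pow_self p ha0
  have h_dvd_succ : p ∣ n + 1 := hb ▸ dvd_pow_self p hb0
  exact hp.one_lt.ne' (Nat.dvd_one.1 ((Nat.dvd_add_right h_dvd).1 h_dvd_succ))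

/-- The only integers `s` with `s * (s - 1)` a prime power are `2` and `-1`. -/
lemma eq_two_or_eq_neg_one_of_mul_pred_eq_prime_pow {p m : ℕ} {s : ℤ} (hp : p.Prime)
    (h : s * (s - 1) = ((p ^ m : ℕ) : ℤ)) : s = 2 ∨ s = -1 := by
  have h_pos : 0 < s * (s - 1) := h ▸ Int.natCast_pos.2 (pow_pos hp.pos m)
  rcases le_or_gt s 0 with hs | hs
  · right
    obtain ⟨n, rfl⟩ : ∃ n : ℕ, s = -n := ⟨s.natAbs, by lia⟩
    have hn : 0 < n := Nat.pos_of_ne_zero (by rintro rfl; simp at h_pos)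
    have := eq_one_of_mul_succ_eq_prime_pow (m := m) hp hn (by zify at h ⊢; linarith)
    lia
  · left
    obtain ⟨n, rfl⟩ : ∃ n : ℕ, s = n + 1 := ⟨(s - 1).natAbs, by lia⟩
    have hn : 0 < n := Nat.pos_of_ne_zero (by rintro rfl; simp at h_pos)
    have := eq_one_of_mul_succ_eq_prime_pow (m := m) hp hn (by zify at h ⊢; linarith)
    lia

/-- Let q = p^m be a prime power. There exist integers s and t with
X⁴ − X³ + qX² − qX + q² = (X² − sX + q)(X² − tX + q) in ℤ[X] if and only if
q = 2, in which case {s, t} = {2, −1}. -/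
theorem stmt_13 (p m : ℕ) (hp : p.Prime) (hm : 1 ≤ m) (q : ℕ) (hq : q = p ^ m) :
    ((∃ s t : ℤ,
        (X ^ 4 - X ^ 3 + C (q : ℤ) * X ^ 2 - C (q : ℤ) * X + C ((q : ℤ) ^ 2) : ℤ[X]) =
          (X ^ 2 - C s * X + C (q : ℤ)) * (X ^ 2 - C t * X + C (q : ℤ))) ↔ q = 2) ∧
    (∀ s t : ℤ,
        (X ^ 4 - X ^ 3 + C (q : ℤ) * X ^ 2 - C (q : ℤ) * X + C ((q : ℤ) ^ 2) : ℤ[X]) =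
          (X ^ 2 - C s * X + C (q : ℤ)) * (X ^ 2 - C t * X + C (q : ℤ)) →
        (s = 2 ∧ t = -1) ∨ (s = -1 ∧ t = 2)) := by
  simp only [weil_factorization_iff]
  have h_traces : ∀ s t : ℤ, s + t = 1 ∧ s * t = -q →
      (s = 2 ∧ t = -1) ∨ (s = -1 ∧ t = 2) := by
    rintro s t ⟨h_sum, h_prod⟩
    obtain rfl : t = 1 - s := by linarith
    have h : s * (s - 1) = ((p ^ m : ℕ) : ℤ) := by rw [← hq]; linarith
    rcases eq_two_or_eq_neg_one_of_mul_pred_eq_prime_pow hp h with rfl | rfl <;> simp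
  refine ⟨⟨?_, ?_⟩, h_traces⟩
  · rintro ⟨s, t, h⟩
    rcases h_traces s t h with ⟨rfl, rfl⟩ | ⟨rfl, rfl⟩ <;> lia
  · rintro rfl
    exact ⟨2, -1, by norm_num⟩
end
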